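/- (Example 4.1) Let P be the classical Cantor distribution: r₁ = r₂ = 1/3, p₁ = p₂ = 1/2, P = (1/2)·(P∘S₁⁻¹) + (1/2)·(P∘S₂⁻¹), and assume P([0,1]) = 1. Then the set α = {1/18, 5/18, 5/6} together with the cells J₁₁ = [0, 1/9], J₁₂ = [2/9, 1/3], J₂ = [2/3, 1] forms a centroidal Voronoi tessellation with three means: (i) P(J₁₁ ∪ J₁₂ ∪ J₂) = 1; (ii) the centroids satisfy (1/P(J₁₁)) ∫_{J₁₁} x dP(x) = 1/18, (1/P(J₁₂)) ∫_{J₁₂} x dP(x) = 5/18, and (1/P(J₂)) ∫_{J₂} x dP(x) = 5/6; and (iii) every x ∈ J₁₁ satisfies |x − 1/18| = min_{b ∈ α} |x − b|, every x ∈ J₁₂ satisfies |x − 5/18| = min_{b ∈ α} |x − b|, and every x ∈ J₂ satisfies |x − 5/6| = min_{b ∈ α} |x − b|. -/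

import Mathlib

open MeasureTheory

/-!
The measure `P` restricted to a cylinder `S_σ(K)` is, up to the factor `p_σ`, the image of `P`
under `S_σ`. As `S_σ` is affine, the centroid of the cylinder is therefore the image under `S_σ` of
the mean of `P`. Self-similarity forces the mean `m` of the Cantor distribution to satisfy
`m = (m / 3) / 2 + (m / 3 + 2 / 3) / 2`, so `m = 1 / 2`. Voronoi regions are convex, so an interval
lies in one as soon as its endpoints do.
-/

open scoped ENNReal

section Average

variable {X E F : Type*} [MeasurableSpace X] {μ : Measure X}
  [NormedAddCommGroup E] [NormedSpace ℝ E] [CompleteSpace E]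
  [NormedAddCommGroup F] [NormedSpace ℝ F] [CompleteSpace F]

theorem average_continuousAffineMap_comp [IsFiniteMeasure μ] [NeZero μ] (T : E →ᴬ[ℝ] F)
    {f : X → E} (hf : Integrable f μ) : ⨍ x, T (f x) ∂μ = T (⨍ x, f x ∂μ) := by
  calc ⨍ x, T (f x) ∂μ = ⨍ x, (T.contLinear (f x) + T 0) ∂μ := by rw [T.decomp]; simp
    _ = ⨍ x, T.contLinear (f x) ∂μ + ⨍ _, T 0 ∂μ :=
      integral_add (T.contLinear.integrable_comp hf.to_average) (integrable_const _)
    _ = T.contLinear (⨍ x, f x ∂μ) + T 0 := by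
      rw [average_const, average, T.contLinear.integral_comp_comm hf.to_average, average]
    _ = T (⨍ x, f x ∂μ) := (congrFun T.decomp _).symm

end Average

section SelfSimilar

variable {ι X : Type*}

/-- The composition `S_σ = S_{σ₁} ∘ ⋯ ∘ S_{σ_k}` along a finite word `σ`. The cylinder `J_σ` of the
iterated function system `S` on `K` is `wordMap S σ '' K`. -/
def wordMap (S : ι → X → X) (σ : List ι) (x : X) : X := σ.foldr S x

theorem wordMap_nil (S : ι → X → X) (x : X) : wordMap S [] x = x := rfl

theorem wordMap_cons (S : ι → X → X) (i : ι) (σ : List ι) (x : X) :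
    wordMap S (i :: σ) x = S i (wordMap S σ x) := rfl

theorem wordMap_nil_image (S : ι → X → X) (A : Set X) : wordMap S [] '' A = A :=
  Set.image_id' A

theorem wordMap_cons_image (S : ι → X → X) (i : ι) (σ : List ι) (A : Set X) :
    wordMap S (i :: σ) '' A = S i '' (wordMap S σ '' A) :=
  Set.image_comp (S i) (wordMap S σ) A

variable {S : ι → X → X} {K : Set X}

theorem wordMap_image_subset (hSK : ∀ i, Set.MapsTo (S i) K K) (σ : List ι) :
    wordMap S σ '' K ⊆ K := by
  induction σ with
  | nil => rw [wordMap_nil_image]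
  | cons i σ ih => rw [wordMap_cons_image]; exact (Set.image_mono ih).trans (hSK i).image_subset

variable [MeasurableSpace X] {p : ι → ℝ≥0∞} {P : Measure X}

theorem measurableSet_wordMap_image (hS : ∀ i, MeasurableEmbedding (S i)) (hK : MeasurableSet K)
    (σ : List ι) : MeasurableSet (wordMap S σ '' K) := by
  induction σ with
  | nil => rwa [wordMap_nil_image]
  | cons i σ ih => rw [wordMap_cons_image]; exact (hS i).measurableSet_image.2 ih

/-- `P` is self-similar for the maps `S i` with weights `p i`: `P = ∑ i, p i • P ∘ (S i)⁻¹`. The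
index type may be infinite, and the weights are not normalised. -/
def IsSelfSimilar (S : ι → X → X) (p : ι → ℝ≥0∞) (P : Measure X) : Prop :=
  P = Measure.sum fun i => p i • P.map (S i)

namespace IsSelfSimilar

theorem ae_mem_iUnion_image [Countable ι] (hP : IsSelfSimilar S p P)
    (hS : ∀ i, MeasurableEmbedding (S i)) {A : ι → Set X} (hA : ∀ i, ∀ᵐ x ∂P, x ∈ A i) :
    ∀ᵐ x ∂P, x ∈ ⋃ i, S i '' A i := by
  rw [hP, Measure.ae_sum_iff]
  intro i
  refine Measure.ae_smul_measure ((hS i).ae_map_iff.2 ?_) (p i)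
  filter_upwards [hA i] with x hx
  exact Set.mem_iUnion_of_mem i (Set.mem_image_of_mem (S i) hx)

theorem hasSum_integral {E : Type*} [NormedAddCommGroup E] [NormedSpace ℝ E]
    (hP : IsSelfSimilar S p P) (hS : ∀ i, MeasurableEmbedding (S i)) {f : X → E}
    (hf : Integrable f P) :
    HasSum (fun i => (p i).toReal • ∫ x, f (S i x) ∂P) (∫ x, f x ∂P) := by
  have hsum := hasSum_integral_measure (hP ▸ hf)
  rw [← hP] at hsum
  simpa only [integral_smul_measure, (hS _).integral_map] using hsum

variable (hP : IsSelfSimilar S p P) (hS : ∀ i, MeasurableEmbedding (S i))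
  (hPK : ∀ᵐ x ∂P, x ∈ K) (hdisj : Pairwise (Function.onFun Disjoint fun i => S i '' K))

include hP hS hPK hdisj

theorem restrict_image {A : Set X} (hA : MeasurableSet A) (hAK : A ⊆ K) (i : ι) :
    P.restrict (S i '' A) = p i • (P.restrict A).map (S i) := by
  have hself : (P.map (S i)).restrict (S i '' A) = (P.restrict A).map (S i) := by
    rw [(hS i).restrict_map, (hS i).injective.preimage_image]
  have hother : ∀ j ≠ i, (P.map (S j)).restrict (S i '' A) = 0 := by
    intro j hji
    have hnull : P (S j ⁻¹' (S i '' A)) = 0 := by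
      rw [measure_eq_zero_iff_ae_notMem]
      filter_upwards [hPK] with x hxK hx
      exact Set.disjoint_left.1 (hdisj hji) (Set.mem_image_of_mem (S j) hxK)
        (Set.image_mono hAK hx)
    rw [(hS j).restrict_map, Measure.restrict_eq_zero.2 hnull, Measure.map_zero]
  conv_lhs => rw [hP]
  rw [Measure.restrict_sum _ ((hS i).measurableSet_image.2 hA)]
  simp only [Measure.restrict_smul]
  ext B hB
  rw [Measure.sum_apply _ hB, tsum_eq_single i, hself]
  intro j hji
  simp [hother j hji]

theorem measure_image {A : Set X} (hA : MeasurableSet A) (hAK : A ⊆ K) (i : ι) :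
    P (S i '' A) = p i * P A := by
  rw [← Measure.restrict_apply_univ, hP.restrict_image hS hPK hdisj hA hAK, Measure.smul_apply,
    (hS i).map_apply, Set.preimage_univ, Measure.restrict_apply_univ, smul_eq_mul]

theorem measure_wordMap_image (hK : MeasurableSet K) (hSK : ∀ i, Set.MapsTo (S i) K K)
    (σ : List ι) :
    P (wordMap S σ '' K) = (σ.map p).prod * P K := by
  induction σ with
  | nil => rw [wordMap_nil_image, List.map_nil, List.prod_nil, one_mul]
  | cons i σ ih =>
    rw [wordMap_cons_image, hP.measure_image hS hPK hdisj (measurableSet_wordMap_image hS hK σ)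
      (wordMap_image_subset hSK σ), ih, List.map_cons, List.prod_cons, mul_assoc]

theorem setAverage_image {E : Type*} [NormedAddCommGroup E] [NormedSpace ℝ E]
    {A : Set X} (hA : MeasurableSet A) (hAK : A ⊆ K) {i : ι} (hp₀ : p i ≠ 0) (hp : p i ≠ ∞)
    (f : X → E) :
    ⨍ x in S i '' A, f x ∂P = ⨍ x in A, f (S i x) ∂P := by
  have hpi : (p i).toReal ≠ 0 := ENNReal.toReal_ne_zero.2 ⟨hp₀, hp⟩
  rw [setAverage_eq, setAverage_eq, measureReal_def, hP.measure_image hS hPK hdisj hA hAK,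
    hP.restrict_image hS hPK hdisj hA hAK, integral_smul_measure, (hS i).integral_map,
    ENNReal.toReal_mul, mul_inv_rev, smul_smul, inv_mul_cancel_right₀ hpi, measureReal_def]

end IsSelfSimilar

end SelfSimilar

section AffineSelfSimilar

variable {ι E : Type*} [NormedAddCommGroup E] [NormedSpace ℝ E] [CompleteSpace E]
  [MeasurableSpace E] {S : ι → E →ᴬ[ℝ] E} {p : ι → ℝ≥0∞} {P : Measure E} {K : Set E}

theorem IsSelfSimilar.setAverage_wordMap_image [IsFiniteMeasure P] [NeZero P]
    (hP : IsSelfSimilar (fun i => S i) p P) (hS : ∀ i, MeasurableEmbedding (S i))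
    (hPK : ∀ᵐ x ∂P, x ∈ K) (hdisj : Pairwise (Function.onFun Disjoint fun i => S i '' K))
    (hK : MeasurableSet K) (hSK : ∀ i, Set.MapsTo (S i) K K)
    (hp₀ : ∀ i, p i ≠ 0) (hp : ∀ i, p i ≠ ∞) (hint : Integrable (fun x => x) P) (σ : List ι) :
    ⨍ x in wordMap (fun i => S i) σ '' K, x ∂P = wordMap (fun i => S i) σ (⨍ x, x ∂P) := by
  induction σ with
  | nil => rw [wordMap_nil_image, Measure.restrict_eq_self_of_ae_mem hPK, wordMap_nil]
  | cons i σ ih =>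
    have hne : NeZero (P.restrict (wordMap (fun i => S i) σ '' K)) := by
      refine ⟨mt Measure.restrict_eq_zero.1 ?_⟩
      rw [hP.measure_wordMap_image hS hPK hdisj hK hSK]
      refine mul_ne_zero (List.prod_ne_zero (by simp [hp₀])) ?_
      rw [← Measure.restrict_apply_univ, Measure.restrict_eq_self_of_ae_mem hPK]
      exact NeZero.ne _
    rw [wordMap_cons_image, hP.setAverage_image hS hPK hdisj (measurableSet_wordMap_image hS hK σ)
      (wordMap_image_subset hSK σ) (hp₀ i) (hp i),
      average_continuousAffineMap_comp (S i) hint.restrict, ih, wordMap_cons]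

end AffineSelfSimilar

section Voronoi

/-- The Voronoi region of the generator `a` among the generators `α`: the points to which no
generator is closer than `a`. Ties are allowed, so neighbouring regions share their boundary. -/
def voronoiRegion {X : Type*} [Dist X] (α : Set X) (a : X) : Set X :=
  {x | ∀ b ∈ α, dist x a ≤ dist x b}

theorem convex_setOf_dist_le_dist {E : Type*} [NormedAddCommGroup E] [InnerProductSpace ℝ E]
    (a b : E) : Convex ℝ {x : E | dist x a ≤ dist x b} := by
  have hhalf : {x : E | dist x a ≤ dist x b} =
      {x | inner ℝ (b - a) x ≤ (‖b‖ ^ 2 - ‖a‖ ^ 2) / 2} := by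
    ext x
    simp only [Set.mem_ofPred_eq, dist_eq_norm]
    rw [← sq_le_sq₀ (norm_nonneg _) (norm_nonneg _), norm_sub_sq_real, norm_sub_sq_real,
      inner_sub_left, real_inner_comm x a, real_inner_comm x b]
    constructor <;> intro h <;> linarith
  rw [hhalf]
  exact convex_halfSpace_le (innerSL ℝ (b - a)).toLinearMap.isLinear _

theorem convex_voronoiRegion {E : Type*} [NormedAddCommGroup E] [InnerProductSpace ℝ E]
    (α : Set E) (a : E) : Convex ℝ (voronoiRegion α a) := by
  simp only [voronoiRegion, Set.ofPred_forall]
  exact convex_iInter₂ fun b _ => convex_setOf_dist_le_dist a b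

theorem isLeast_dist_image_iff {X : Type*} [Dist X] {α : Set X} {a x : X} (ha : a ∈ α) :
    IsLeast ((fun b => dist x b) '' α) (dist x a) ↔ x ∈ voronoiRegion α a := by
  simp only [IsLeast, Set.mem_image_of_mem _ ha, true_and, mem_lowerBounds, Set.forall_mem_image,
    voronoiRegion, Set.mem_ofPred_eq]

theorem isLeast_abs_sub_of_mem_Icc {α : Set ℝ} {a c d x : ℝ} (ha : a ∈ α)
    (hc : c ∈ voronoiRegion α a) (hd : d ∈ voronoiRegion α a) (hx : x ∈ Set.Icc c d) :
    IsLeast ((fun b => |x - b|) '' α) |x - a| :=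
  (isLeast_dist_image_iff ha).2 ((convex_voronoiRegion α a).ordConnected.out hc hd hx)

end Voronoi

section Cantor

/-- The two similitudes `x ↦ x / 3` and `x ↦ x / 3 + 2 / 3` generating the Cantor set, as the affine
maps sending `[0, 1]` onto `[0, 1 / 3]` and `[2 / 3, 1]`. They are numbered `0, 1`, not `1, 2`. -/
noncomputable def cantorMap : Fin 2 → ℝ →ᴬ[ℝ] ℝ :=
  ![ContinuousAffineMap.lineMap 0 (1 / 3), ContinuousAffineMap.lineMap (2 / 3) 1]

theorem cantorMap_zero_apply (x : ℝ) : cantorMap 0 x = x / 3 := by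
  have h : cantorMap 0 x = AffineMap.lineMap 0 (1 / 3) x := rfl
  rw [h, AffineMap.lineMap_apply_ring']
  ring

theorem cantorMap_one_apply (x : ℝ) : cantorMap 1 x = x / 3 + 2 / 3 := by
  have h : cantorMap 1 x = AffineMap.lineMap (2 / 3) 1 x := rfl
  rw [h, AffineMap.lineMap_apply_ring']
  ring

theorem cantorMap_image_Icc (i : Fin 2) (a b : ℝ) :
    cantorMap i '' Set.Icc a b = Set.Icc (cantorMap i a) (cantorMap i b) := by
  have himage (c : ℝ) : (fun x => x / 3 + c) '' Set.Icc a b = Set.Icc (a / 3 + c) (b / 3 + c) := by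
    simp only [div_eq_inv_mul, inv_pos, Nat.ofNat_pos, Set.image_affine_Icc']
  match i with
  | 0 => simpa only [cantorMap_zero_apply, add_zero] using himage 0
  | 1 => simpa only [cantorMap_one_apply] using himage (2 / 3)

theorem wordMap_cantorMap_image_Icc (σ : List (Fin 2)) (a b : ℝ) :
    wordMap (fun i => cantorMap i) σ '' Set.Icc a b =
      Set.Icc (wordMap (fun i => cantorMap i) σ a) (wordMap (fun i => cantorMap i) σ b) := by
  induction σ with
  | nil => exact wordMap_nil_image _ _
  | cons i σ ih => rw [wordMap_cons_image, ih, cantorMap_image_Icc, wordMap_cons, wordMap_cons]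

theorem measurableEmbedding_cantorMap (i : Fin 2) : MeasurableEmbedding (cantorMap i) := by
  refine (cantorMap i).continuous.measurableEmbedding fun x y hxy => ?_
  fin_cases i <;> simpa [cantorMap_zero_apply, cantorMap_one_apply] using hxy

theorem mapsTo_cantorMap (i : Fin 2) :
    Set.MapsTo (cantorMap i) (Set.Icc 0 1) (Set.Icc 0 1) := by
  rw [Set.mapsTo_iff_image_subset, cantorMap_image_Icc]
  refine Set.Icc_subset_Icc ?_ ?_ <;> fin_cases i <;>
    norm_num [cantorMap_zero_apply, cantorMap_one_apply]

theorem pairwise_disjoint_cantorMap_image :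
    Pairwise (Function.onFun Disjoint fun i => cantorMap i '' Set.Icc 0 1) := by
  have hdisj : Disjoint (cantorMap 0 '' Set.Icc 0 1) (cantorMap 1 '' Set.Icc 0 1) := by
    rw [cantorMap_image_Icc, cantorMap_image_Icc, Set.disjoint_iff_forall_ne]
    rintro x ⟨-, hx⟩ y ⟨hy, -⟩
    norm_num [cantorMap_zero_apply, cantorMap_one_apply] at hx hy
    linarith
  intro i j hij
  fin_cases i <;> fin_cases j
  exacts [absurd rfl hij, hdisj, hdisj.symm, absurd rfl hij]

variable {P : Measure ℝ}
  (hP : IsSelfSimilar (fun i => cantorMap i) (fun _ => 2⁻¹) P)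
  (hP01 : ∀ᵐ x ∂P, x ∈ Set.Icc (0 : ℝ) 1)

include hP hP01

theorem ae_mem_cantor_cells :
    ∀ᵐ x ∂P, x ∈ Set.Icc (0 : ℝ) (1 / 9) ∪ Set.Icc (2 / 9) (1 / 3) ∪ Set.Icc (2 / 3) 1 := by
  have hlevel₁ := hP.ae_mem_iUnion_image measurableEmbedding_cantorMap fun _ => hP01
  have hrefine := hP.ae_mem_iUnion_image measurableEmbedding_cantorMap
    (A := ![⋃ i, cantorMap i '' Set.Icc 0 1, Set.Icc 0 1])
    (Fin.forall_fin_two.2 ⟨hlevel₁, hP01⟩)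
  filter_upwards [hrefine] with x hx
  simp only [Set.mem_iUnion, Fin.exists_fin_two, Matrix.cons_val_zero, Matrix.cons_val_one,
    Set.image_iUnion, cantorMap_image_Icc] at hx
  norm_num [cantorMap_zero_apply, cantorMap_one_apply, -Set.mem_Icc] at hx ⊢
  exact hx

variable [IsProbabilityMeasure P]

theorem integral_id_cantor : ∫ x, x ∂P = 1 / 2 := by
  have hint : Integrable (fun x : ℝ => x) P := Integrable.of_mem_Icc 0 1 aemeasurable_id hP01
  have hmean (i : Fin 2) : ∫ x, cantorMap i x ∂P = cantorMap i (∫ x, x ∂P) := by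
    simpa only [average_eq_integral] using average_continuousAffineMap_comp (cantorMap i) hint
  have hsum := (hP.hasSum_integral measurableEmbedding_cantorMap hint).unique (hasSum_fintype _)
  simp only [hmean, Fin.sum_univ_two, cantorMap_zero_apply, cantorMap_one_apply,
    ENNReal.toReal_inv, ENNReal.toReal_ofNat, smul_eq_mul] at hsum
  linarith

theorem setAverage_Icc_wordMap_cantorMap (σ : List (Fin 2)) :
    ⨍ x in Set.Icc (wordMap (fun i => cantorMap i) σ 0) (wordMap (fun i => cantorMap i) σ 1), x ∂P =
      wordMap (fun i => cantorMap i) σ (1 / 2) := by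
  rw [← wordMap_cantorMap_image_Icc,
    hP.setAverage_wordMap_image measurableEmbedding_cantorMap hP01
      pairwise_disjoint_cantorMap_image measurableSet_Icc mapsTo_cantorMap (by simp) (by simp)
      (Integrable.of_mem_Icc 0 1 aemeasurable_id hP01),
    average_eq_integral, integral_id_cantor hP hP01]

end Cantor

theorem stmt_16 (P : Measure ℝ) [IsProbabilityMeasure P]
    (hP : P = (2⁻¹ : ENNReal) • P.map (fun x : ℝ => x / 3) +
              (2⁻¹ : ENNReal) • P.map (fun x : ℝ => x / 3 + 2 / 3))
    (hsupp : P (Set.Icc (0 : ℝ) 1) = 1) :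
    P (Set.Icc (0 : ℝ) (1 / 9) ∪ Set.Icc (2 / 9) (1 / 3) ∪ Set.Icc (2 / 3) 1) = 1 ∧
    (P (Set.Icc (0 : ℝ) (1 / 9))).toReal⁻¹ *
        (∫ x in Set.Icc (0 : ℝ) (1 / 9), x ∂P) = 1 / 18 ∧
    (P (Set.Icc (2 / 9 : ℝ) (1 / 3))).toReal⁻¹ *
        (∫ x in Set.Icc (2 / 9 : ℝ) (1 / 3), x ∂P) = 5 / 18 ∧
    (P (Set.Icc (2 / 3 : ℝ) 1)).toReal⁻¹ *
        (∫ x in Set.Icc (2 / 3 : ℝ) 1, x ∂P) = 5 / 6 ∧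
    (∀ x ∈ Set.Icc (0 : ℝ) (1 / 9),
      IsLeast ((fun b => |x - b|) '' ({1 / 18, 5 / 18, 5 / 6} : Set ℝ)) |x - 1 / 18|) ∧
    (∀ x ∈ Set.Icc (2 / 9 : ℝ) (1 / 3),
      IsLeast ((fun b => |x - b|) '' ({1 / 18, 5 / 18, 5 / 6} : Set ℝ)) |x - 5 / 18|) ∧
    (∀ x ∈ Set.Icc (2 / 3 : ℝ) 1,
      IsLeast ((fun b => |x - b|) '' ({1 / 18, 5 / 18, 5 / 6} : Set ℝ)) |x - 5 / 6|) := by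
  have hself : IsSelfSimilar (fun i => cantorMap i) (fun _ => 2⁻¹) P := by
    simpa only [IsSelfSimilar, Measure.sum_fintype, Fin.sum_univ_two, funext cantorMap_zero_apply,
      funext cantorMap_one_apply] using hP
  have hP01 : ∀ᵐ x ∂P, x ∈ Set.Icc (0 : ℝ) 1 :=
    (mem_ae_iff_prob_eq_one measurableSet_Icc).2 hsupp
  have hcentroid := setAverage_Icc_wordMap_cantorMap hself hP01
  simp only [setAverage_eq, measureReal_def, smul_eq_mul] at hcentroid
  refine ⟨?_, ?_, ?_, ?_, fun x => ?_, fun x => ?_, fun x => ?_⟩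
  · exact (mem_ae_iff_prob_eq_one ((measurableSet_Icc.union measurableSet_Icc).union
      measurableSet_Icc)).1 (ae_mem_cantor_cells hself hP01)
  · convert hcentroid [0, 0] using 5 <;>
      norm_num [wordMap_cons, wordMap_nil, cantorMap_zero_apply, cantorMap_one_apply]
  · convert hcentroid [0, 1] using 5 <;>
      norm_num [wordMap_cons, wordMap_nil, cantorMap_zero_apply, cantorMap_one_apply]
  · convert hcentroid [1] using 5 <;>
      norm_num [wordMap_cons, wordMap_nil, cantorMap_zero_apply, cantorMap_one_apply]
  all_goals
    refine isLeast_abs_sub_of_mem_Icc (by simp) ?_ ?_ <;>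
      norm_num [voronoiRegion, Real.dist_eq]
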